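/- arXiv:1706.08862 — 4 statements merged into one kernel-verified Lean document; each statement's English description precedes it below -/
import Mathlib

section
/- Let h : [0,T] × Z → [0,∞) be Borel measurable and suppose that (i) ∫_{[0,T]×Z} h² dμ < ∞, and (ii) there exists δ > 0 such that ∫_E e^{δ h(s,z)²} dμ < ∞ for every Borel set E ⊆ [0,T] × Z with μ(E) < ∞. Then for every m ∈ ℕ, sup_{g ∈ S_2^m} ∫_{[0,T]×Z} h(s,z)² (g(s,z) + 1) dμ < ∞. -/
/-!
The proof rests on Young's inequality for the entropy function and its convex conjugate,
`a b ≤ (exp a - 1) + ℓ(b)` (`mul_le_exp_sub_one_add_ell`), applied with `a = δ h²` and `b = g`: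
`h² g ≤ δ⁻¹ (exp (δ h²) - 1) + δ⁻¹ ℓ(g)`.
The second term integrates to at most `δ⁻¹ m`. For the first, split along `E = {h² ≥ 1}`, which has
finite measure by Markov's inequality: on `E` the exponential is integrable by hypothesis, and off
`E` one has `exp (δ h²) - 1 ≤ δ h² exp δ`, a multiple of the integrable function `h²`.
The resulting bound does not depend on `g`.
-/

open MeasureTheory
open scoped ENNReal

/-- The entropy function ℓ(x) = x log x − x + 1 for x > 0, with ℓ(0) = 1. -/
noncomputable def ell (x : ℝ) : ℝ := if x = 0 then 1 else x * Real.log x - x + 1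

/-- Young's inequality for `ell` and its convex conjugate `a ↦ exp a - 1`. For `b > 0` it is
`t + 1 ≤ exp t` at `t = a - log b`, multiplied by `b`. -/
lemma mul_le_exp_sub_one_add_ell (a b : ℝ) (hb : 0 ≤ b) :
    a * b ≤ Real.exp a - 1 + ell b := by
  unfold ell
  split_ifs with h0
  · subst h0
    have := Real.exp_pos a
    linarith
  · have hb' : 0 < b := lt_of_le_of_ne hb (Ne.symm h0)
    have h1 := mul_le_mul_of_nonneg_left (Real.add_one_le_exp (a - Real.log b)) hb
    rw [Real.exp_sub, Real.exp_log hb', mul_div_cancel₀ _ h0] at h1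
    linarith

lemma ell_nonneg (b : ℝ) (hb : 0 ≤ b) : 0 ≤ ell b := by
  simpa using mul_le_exp_sub_one_add_ell 0 b hb

lemma exp_sub_one_le_mul_exp (x : ℝ) : Real.exp x - 1 ≤ x * Real.exp x := by
  have h1 := mul_le_mul_of_nonneg_right (Real.add_one_le_exp (-x)) (Real.exp_pos x).le
  rw [← Real.exp_add, neg_add_cancel, Real.exp_zero] at h1
  linarith

/-- The bound used where `y = h²` may be large. -/
lemma mul_add_one_le_of_exp {δ y b : ℝ} (hδ : 0 < δ) (hb : 0 ≤ b) :
    y * (b + 1) ≤ y + δ⁻¹ * Real.exp (δ * y) + δ⁻¹ * ell b := by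
  have h1 := mul_le_mul_of_nonneg_left (mul_le_exp_sub_one_add_ell (δ * y) b hb)
    (inv_pos.2 hδ).le
  have h2 : δ⁻¹ * (δ * y * b) = y * b := by field_simp
  have h3 := inv_pos.2 hδ
  linarith

/-- The bound used where `y = h²` is at most `1`. -/
lemma mul_add_one_le_of_le_one {δ y b : ℝ} (hδ : 0 < δ) (hy : 0 ≤ y) (hy1 : y ≤ 1) (hb : 0 ≤ b) :
    y * (b + 1) ≤ (1 + Real.exp δ) * y + δ⁻¹ * ell b := by
  have h1 := mul_le_mul_of_nonneg_left (mul_le_exp_sub_one_add_ell (δ * y) b hb)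
    (inv_pos.2 hδ).le
  have h2 : δ⁻¹ * (δ * y * b) = y * b := by field_simp
  have h3 := mul_le_mul_of_nonneg_left (exp_sub_one_le_mul_exp (δ * y)) (inv_pos.2 hδ).le
  have h4 : δ⁻¹ * (δ * y * Real.exp (δ * y)) = y * Real.exp (δ * y) := by field_simp
  have h5 : Real.exp (δ * y) ≤ Real.exp δ := Real.exp_le_exp.2 (by nlinarith)
  have h6 := mul_le_mul_of_nonneg_left h5 hy
  linarith

/-- If ∫ h² dμ < ∞ and e^{δ h²} is integrable on finite-measure sets for some δ > 0,
then for every m, sup over g ∈ S₂ᵐ of ∫ h² (g + 1) dμ is finite. -/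
theorem sup_lintegral_sq_mul_add_one_lt_top
    {Z : Type*} [TopologicalSpace Z] [PolishSpace Z] [LocallyCompactSpace Z]
    [MeasurableSpace Z] [BorelSpace Z]
    (ν : Measure Z) [SigmaFinite ν] (T : ℝ) (hT : 0 < T)
    (μ : Measure (ℝ × Z)) (hμ : μ = (volume.restrict (Set.Icc 0 T)).prod ν)
    (h : ℝ × Z → ℝ) (hmeas : Measurable h) (hnonneg : ∀ x, 0 ≤ h x)
    (hL2 : ∫⁻ x, ENNReal.ofReal ((h x) ^ 2) ∂μ < ⊤)
    (hexp : ∃ δ : ℝ, 0 < δ ∧ ∀ E : Set (ℝ × Z), MeasurableSet E → μ E < ⊤ →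
      ∫⁻ x in E, ENNReal.ofReal (Real.exp (δ * (h x) ^ 2)) ∂μ < ⊤) :
    ∀ m : ℕ, ∃ C : ℝ≥0∞, C ≠ ⊤ ∧
      ∀ g : ℝ × Z → ℝ, Measurable g → (∀ x, 0 ≤ g x) →
        (∫⁻ x, ENNReal.ofReal (ell (g x)) ∂μ) ≤ (m : ℝ≥0∞) →
        ∫⁻ x, ENNReal.ofReal ((h x) ^ 2 * (g x + 1)) ∂μ ≤ C := by
  intro m
  obtain ⟨δ, hδ, hE⟩ := hexp
  have hδ' : 0 ≤ δ⁻¹ := (inv_pos.2 hδ).le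
  set E : Set (ℝ × Z) := {x | 1 ≤ (h x) ^ 2} with hEdef
  have hEm : MeasurableSet E := measurableSet_le measurable_const (hmeas.pow_const 2)
  -- Markov's inequality for `h²` at level `1`
  have hEfin : μ E < ⊤ := by
    refine lt_of_le_of_lt ?_ hL2
    rw [← setLIntegral_one]
    refine (setLIntegral_mono' hEm fun x hx => ?_).trans (setLIntegral_le_lintegral E _)
    exact ENNReal.one_le_ofReal.2 hx
  set c : ℝ≥0∞ := ENNReal.ofReal (1 + Real.exp δ)
  set d : ℝ≥0∞ := ENNReal.ofReal δ⁻¹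
  have hmeasE : Measurable fun x => ENNReal.ofReal (Real.exp (δ * (h x) ^ 2)) := by fun_prop
  refine ⟨c * ∫⁻ x, ENNReal.ofReal ((h x) ^ 2) ∂μ
    + d * ∫⁻ x in E, ENNReal.ofReal (Real.exp (δ * (h x) ^ 2)) ∂μ + d * m, ?_, ?_⟩
  · have h1 := hE E hEm hEfin
    exact ENNReal.add_ne_top.2 ⟨ENNReal.add_ne_top.2
      ⟨ENNReal.mul_ne_top ENNReal.ofReal_ne_top hL2.ne,
        ENNReal.mul_ne_top ENNReal.ofReal_ne_top h1.ne⟩,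
      ENNReal.mul_ne_top ENNReal.ofReal_ne_top (ENNReal.natCast_ne_top m)⟩
  · intro g hg hg0 hgm
    have key : ∀ x, ENNReal.ofReal ((h x) ^ 2 * (g x + 1)) ≤
        c * ENNReal.ofReal ((h x) ^ 2)
          + d * E.indicator (fun x => ENNReal.ofReal (Real.exp (δ * (h x) ^ 2))) x
          + d * ENNReal.ofReal (ell (g x)) := by
      intro x
      have hy : 0 ≤ (h x) ^ 2 := sq_nonneg _
      have hl := ell_nonneg _ (hg0 x)
      have he := Real.exp_pos δ
      have he' := Real.exp_pos (δ * (h x) ^ 2)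
      by_cases hx : x ∈ E
      · rw [Set.indicator_of_mem hx, ← ENNReal.ofReal_mul (by positivity),
          ← ENNReal.ofReal_mul hδ', ← ENNReal.ofReal_mul hδ',
          ← ENNReal.ofReal_add (by positivity) (by positivity),
          ← ENNReal.ofReal_add (by positivity) (by positivity)]
        refine ENNReal.ofReal_le_ofReal ((mul_add_one_le_of_exp hδ (hg0 x)).trans ?_)
        nlinarith [mul_nonneg he.le hy]
      · rw [Set.indicator_of_notMem hx, mul_zero, add_zero, ← ENNReal.ofReal_mul (by positivity),
          ← ENNReal.ofReal_mul hδ', ← ENNReal.ofReal_add (by positivity) (by positivity)]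
        exact ENNReal.ofReal_le_ofReal
          (mul_add_one_le_of_le_one hδ hy (not_le.1 hx).le (hg0 x))
    have hind := hmeasE.indicator hEm
    refine (lintegral_mono key).trans ?_
    rw [lintegral_add_left (by fun_prop), lintegral_add_left (by fun_prop),
      lintegral_const_mul' _ _ ENNReal.ofReal_ne_top,
      lintegral_const_mul' _ _ ENNReal.ofReal_ne_top,
      lintegral_const_mul' _ _ ENNReal.ofReal_ne_top, lintegral_indicator hEm]
    gcongr
end

section
/- Let h : [0,T] × Z → [0,∞) be Borel measurable and suppose that (i) ∫_{[0,T]×Z} h² dμ < ∞, and (ii) for every δ > 0 and every Borel set E ⊆ [0,T] × Z with μ(E) < ∞ one has ∫_E e^{δ h(s,z)} dμ < ∞. Then for every m ∈ ℕ, sup_{g ∈ S_2^m} ∫_{[0,T]×Z} h(s,z) |g(s,z) − 1| dμ < ∞. -/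
/-!
The function `ell` and `s ↦ exp s - 1 - s` are Legendre dual to each other, which gives Young's
inequality `s * (x - 1) ≤ ell x + (exp s - 1 - s)` (`mul_sub_one_le_ell_add`). Taking `s = h` and
`s = -h` bounds `h * |g - 1|`. Where `h ≤ 1`, the exponential remainder is at most `h ^ 2`, so
`h * |g - 1| ≤ ell g + h ^ 2`. Where `h ≥ 1`, one keeps the bound `ell g + exp h`; by Markov's
inequality this region has finite measure because `h` is square integrable, so `exp h` is
integrable on it. Integrating gives the bound `m + ∫ h ^ 2 + ∫_{1 ≤ h} exp h`, uniform in `g`.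
-/

open MeasureTheory
open scoped ENNReal

/-- Young's inequality for `ell` and its Legendre dual. -/
lemma mul_sub_one_le_ell_add (s x : ℝ) (hx : 0 ≤ x) :
    s * (x - 1) ≤ ell x + (Real.exp s - 1 - s) := by
  unfold ell
  split_ifs with h0
  · subst h0
    linarith [Real.exp_pos s]
  · have hx' : 0 < x := lt_of_le_of_ne hx (Ne.symm h0)
    -- `exp t ≥ t + 1` at `t = s - log x`, multiplied by `x`
    have h1 := mul_le_mul_of_nonneg_left (Real.add_one_le_exp (s - Real.log x)) hx
    rw [Real.exp_sub, Real.exp_log hx', mul_div_cancel₀ _ h0] at h1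
    linarith

lemma ell_nonneg_s5 (x : ℝ) (hx : 0 ≤ x) : 0 ≤ ell x := by
  simpa using mul_sub_one_le_ell_add 0 x hx

lemma mul_abs_le_of_le_one (a x : ℝ) (ha : 0 ≤ a) (ha1 : a ≤ 1) (hx : 0 ≤ x) :
    a * |x - 1| ≤ ell x + a ^ 2 := by
  have e1 := (abs_le.1 (Real.abs_exp_sub_one_sub_id_le (x := a) (by rwa [abs_of_nonneg ha]))).2
  have e2 := (abs_le.1 (Real.abs_exp_sub_one_sub_id_le (x := -a)
    (by rwa [abs_neg, abs_of_nonneg ha]))).2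
  have y1 := mul_sub_one_le_ell_add a x hx
  have y2 := mul_sub_one_le_ell_add (-a) x hx
  rcases abs_cases (x - 1) with ⟨h, -⟩ | ⟨h, -⟩ <;> rw [h] <;> nlinarith

lemma mul_abs_le_exp (a x : ℝ) (ha : 0 ≤ a) (hx : 0 ≤ x) :
    a * |x - 1| ≤ ell x + Real.exp a := by
  have y1 := mul_sub_one_le_ell_add a x hx
  have e1 := Real.add_one_le_exp a
  have l := ell_nonneg_s5 x hx
  rcases abs_cases (x - 1) with ⟨h, -⟩ | ⟨h, -⟩ <;> rw [h] <;> nlinarith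

/-- If ∫ h² dμ < ∞ and e^{δ h} is integrable on finite-measure sets for every δ > 0,
then for every m, sup over g ∈ S₂ᵐ of ∫ h |g − 1| dμ is finite. -/
theorem sup_lintegral_mul_abs_sub_one_lt_top
    {Z : Type*} [TopologicalSpace Z] [PolishSpace Z] [LocallyCompactSpace Z]
    [MeasurableSpace Z] [BorelSpace Z]
    (ν : Measure Z) [SigmaFinite ν] (T : ℝ) (hT : 0 < T)
    (μ : Measure (ℝ × Z)) (hμ : μ = (volume.restrict (Set.Icc 0 T)).prod ν)
    (h : ℝ × Z → ℝ) (hmeas : Measurable h) (hnonneg : ∀ x, 0 ≤ h x)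
    (hL2 : ∫⁻ x, ENNReal.ofReal ((h x) ^ 2) ∂μ < ⊤)
    (hexp : ∀ δ : ℝ, 0 < δ → ∀ E : Set (ℝ × Z), MeasurableSet E → μ E < ⊤ →
      ∫⁻ x in E, ENNReal.ofReal (Real.exp (δ * h x)) ∂μ < ⊤) :
    ∀ m : ℕ, ∃ C : ℝ≥0∞, C ≠ ⊤ ∧
      ∀ g : ℝ × Z → ℝ, Measurable g → (∀ x, 0 ≤ g x) →
        (∫⁻ x, ENNReal.ofReal (ell (g x)) ∂μ) ≤ (m : ℝ≥0∞) →
        ∫⁻ x, ENNReal.ofReal (h x * |g x - 1|) ∂μ ≤ C := by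
  intro m
  have hE : MeasurableSet {x | 1 ≤ h x} := measurableSet_le measurable_const hmeas
  have hμE : μ {x | 1 ≤ h x} < ⊤ := by
    refine lt_of_le_of_lt ?_ hL2
    rw [← lintegral_indicator_one hE]
    refine lintegral_mono (Set.indicator_le fun y hy => ?_)
    rw [Pi.one_apply, ENNReal.one_le_ofReal]
    exact one_le_pow₀ (n := 2) (show 1 ≤ h y from hy)
  have hexpE := hexp 1 one_pos _ hE hμE
  refine ⟨m + ∫⁻ x, ENNReal.ofReal ((h x) ^ 2) ∂μ +
    ∫⁻ x in {x | 1 ≤ h x}, ENNReal.ofReal (Real.exp (1 * h x)) ∂μ, ?_, ?_⟩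
  · exact ENNReal.add_ne_top.2
      ⟨ENNReal.add_ne_top.2 ⟨ENNReal.natCast_ne_top m, hL2.ne⟩, hexpE.ne⟩
  intro g hg hg0 hgm
  rw [← lintegral_indicator hE]
  have hbound : ∀ x, ENNReal.ofReal (h x * |g x - 1|) ≤
      ENNReal.ofReal (ell (g x)) + ENNReal.ofReal ((h x) ^ 2) +
        {x | 1 ≤ h x}.indicator (fun x => ENNReal.ofReal (Real.exp (1 * h x))) x := by
    intro x
    have l := ell_nonneg_s5 (g x) (hg0 x)
    by_cases hx : 1 ≤ h x
    · rw [Set.indicator_of_mem (show x ∈ {x | 1 ≤ h x} from hx), one_mul,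
        ← ENNReal.ofReal_add l (sq_nonneg _),
        ← ENNReal.ofReal_add (add_nonneg l (sq_nonneg _)) (Real.exp_pos _).le]
      apply ENNReal.ofReal_le_ofReal
      linarith [mul_abs_le_exp (h x) (g x) (hnonneg x) (hg0 x), sq_nonneg (h x)]
    · rw [Set.indicator_of_notMem (show x ∉ {x | 1 ≤ h x} from hx), add_zero,
        ← ENNReal.ofReal_add l (sq_nonneg _)]
      exact ENNReal.ofReal_le_ofReal
        (mul_abs_le_of_le_one _ _ (hnonneg x) (not_le.1 hx).le (hg0 x))
  refine (lintegral_mono hbound).trans ?_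
  rw [lintegral_add_right _ (Measurable.indicator (by fun_prop) hE),
    lintegral_add_right _ (by fun_prop)]
  gcongr
end

section
/- Let h : [0,T] × Z → [0,∞) be Borel measurable and suppose that (i) ∫_{[0,T]×Z} h² dμ < ∞, and (ii) for every δ > 0 and every Borel set E ⊆ [0,T] × Z with μ(E) < ∞ one has ∫_E e^{δ h(s,z)} dμ < ∞. Then for every m ∈ ℕ and every η > 0 there exists δ̃ > 0 such that for every Borel set A ⊆ [0,T] with λ_T(A) < δ̃ one has sup_{g ∈ S_2^m} ∫_{A×Z} h(s,z) |g(s,z) − 1| dμ ≤ η. -/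
/-!
The key is Young's inequality for the conjugate pair `ell (1 + ·)` and `a ↦ exp a - 1 - a`: for
`a, b ≥ 0`, `a * |b - 1| ≤ ell b + (exp a - 1 - a)` (`mul_abs_sub_one_le`). Applied with
`a = σ * h` and `b = g` it gives
`∫_{A × Z} h |g - 1| ≤ σ⁻¹ * m + σ⁻¹ * ∫_{A × Z} (exp (σ h) - 1 - σ h)`.
The first term is at most `η / 2` once `σ ≥ 2 m / η`. For this fixed `σ` the function
`exp (σ h) - 1 - σ h` does not involve `g` and is integrable (`lintegral_exp_sub_lt_top`): where
`h ≤ 1` it is at most a constant times `h ^ 2`, and `{h > 1}` has finite measure by Markov's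
inequality, so there the exponential integrability hypothesis applies. Absolute continuity of the
integral of its marginal in time then makes the second term at most `η / 2` as soon as the Lebesgue
measure of `A` is small.
-/


open MeasureTheory
open scoped ENNReal

/-- Young's inequality for the conjugate of `ell (1 + ·)`. -/
lemma mul_sub_one_le (a b : ℝ) (hb : 0 ≤ b) :
    a * (b - 1) ≤ ell b + (Real.exp a - 1 - a) := by
  unfold ell
  split_ifs with h0
  · subst h0
    linarith [Real.exp_pos a]
  · have hb' : 0 < b := lt_of_le_of_ne hb (Ne.symm h0)
    have h1 : Real.exp a = b * Real.exp (a - Real.log b) := by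
      rw [Real.exp_sub, Real.exp_log hb']
      field_simp
    have h2 := mul_le_mul_of_nonneg_left (Real.add_one_le_exp (a - Real.log b)) hb
    rw [h1]
    linarith

lemma mul_abs_sub_one_le (a b : ℝ) (ha : 0 ≤ a) (hb : 0 ≤ b) :
    a * |b - 1| ≤ ell b + (Real.exp a - 1 - a) := by
  rcases le_total 1 b with h | h
  · rw [abs_of_nonneg (by linarith)]
    exact mul_sub_one_le a b hb
  · rw [abs_of_nonpos (by linarith)]
    -- `a ≤ sinh a` says that the conjugate function at `-a` is at most its value at `a`.
    have h1 := mul_sub_one_le (-a) b hb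
    have h2 := Real.self_le_sinh_iff.2 ha
    rw [Real.sinh_eq] at h2
    linarith

lemma exp_sub_one_sub_nonneg (y : ℝ) : 0 ≤ Real.exp y - 1 - y := by
  linarith [Real.add_one_le_exp y]

lemma exp_sub_one_sub_le (y : ℝ) (hy : 0 ≤ y) :
    Real.exp y - 1 - y ≤ Real.exp y * y ^ 2 := by
  have h1 : Real.exp y - 1 ≤ y * Real.exp y := by
    have h2 := mul_le_mul_of_nonneg_left (Real.add_one_le_exp (-y)) (Real.exp_pos y).le
    rw [← Real.exp_add, add_neg_cancel, Real.exp_zero] at h2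
    linarith
  have h3 : (1 + y) * (Real.exp y - 1) ≤ (1 + y) * (y * Real.exp y) := by gcongr
  nlinarith [mul_le_mul_of_nonneg_left h1 hy]

lemma lintegral_exp_sub_lt_top {X : Type*} [MeasurableSpace X] (μ : Measure X)
    (h : X → ℝ) (hmeas : Measurable h) (hnonneg : ∀ x, 0 ≤ h x)
    (hL2 : ∫⁻ x, ENNReal.ofReal ((h x) ^ 2) ∂μ < ⊤)
    (hexp : ∀ δ : ℝ, 0 < δ → ∀ E : Set X, MeasurableSet E → μ E < ⊤ →
      ∫⁻ x in E, ENNReal.ofReal (Real.exp (δ * h x)) ∂μ < ⊤)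
    (σ : ℝ) (hσ : 0 < σ) :
    ∫⁻ x, ENNReal.ofReal (Real.exp (σ * h x) - 1 - σ * h x) ∂μ < ⊤ := by
  have hE : MeasurableSet {x | 1 < h x} := measurableSet_lt measurable_const hmeas
  have hfin : μ {x | 1 < h x} < ⊤ := by
    have h1 : μ {x | 1 ≤ ENNReal.ofReal ((h x) ^ 2)} ≤ _ :=
      meas_ge_le_lintegral_div (μ := μ) (f := fun x => ENNReal.ofReal ((h x) ^ 2))
        (by fun_prop) one_ne_zero ENNReal.one_ne_top
    rw [div_one] at h1
    refine lt_of_le_of_lt (measure_mono ?_) (h1.trans_lt hL2)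
    intro x hx
    have hx : 1 < h x := hx
    simp only [Set.mem_ofPred_eq, ENNReal.one_le_ofReal]
    nlinarith
  rw [← lintegral_add_compl _ hE]
  refine ENNReal.add_lt_top.2 ⟨?_, ?_⟩
  · refine lt_of_le_of_lt (lintegral_mono fun x => ENNReal.ofReal_le_ofReal ?_)
      (hexp σ hσ _ hE hfin)
    nlinarith [mul_nonneg hσ.le (hnonneg x)]
  · have hC : (0 : ℝ) ≤ Real.exp σ * σ ^ 2 := by positivity
    calc ∫⁻ x in {x | 1 < h x}ᶜ, ENNReal.ofReal (Real.exp (σ * h x) - 1 - σ * h x) ∂μ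
        ≤ ∫⁻ x in {x | 1 < h x}ᶜ,
            ENNReal.ofReal (Real.exp σ * σ ^ 2) * ENNReal.ofReal ((h x) ^ 2) ∂μ := by
          refine setLIntegral_mono' hE.compl fun x hx => ?_
          rw [← ENNReal.ofReal_mul hC]
          refine ENNReal.ofReal_le_ofReal ?_
          have hx : h x ≤ 1 := not_lt.1 hx
          refine (exp_sub_one_sub_le _ (mul_nonneg hσ.le (hnonneg x))).trans ?_
          rw [mul_pow, ← mul_assoc]
          have : σ * h x ≤ σ := by nlinarith
          gcongr
      _ ≤ ∫⁻ x, ENNReal.ofReal (Real.exp σ * σ ^ 2) * ENNReal.ofReal ((h x) ^ 2) ∂μ :=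
          setLIntegral_le_lintegral _ _
      _ = ENNReal.ofReal (Real.exp σ * σ ^ 2) * ∫⁻ x, ENNReal.ofReal ((h x) ^ 2) ∂μ :=
          lintegral_const_mul _ (by fun_prop)
      _ < ⊤ := ENNReal.mul_lt_top ENNReal.ofReal_lt_top hL2

/-- Absolute continuity in the first coordinate: the marginal `t ↦ ∫ F (t, z) dν` is integrable, so
its integral over `A` is small as soon as `A` has small measure. -/
lemma exists_pos_setLIntegral_prod_univ_le {Y Z : Type*} [MeasurableSpace Y] [MeasurableSpace Z]
    (κ : Measure Y) [SFinite κ] (ν : Measure Z) [SFinite ν] (F : Y × Z → ℝ≥0∞) (hF : Measurable F)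
    (hfin : ∫⁻ x, F x ∂(κ.prod ν) < ⊤) (ε : ℝ≥0∞) (hε : 0 < ε) :
    ∃ δ : ℝ, 0 < δ ∧ ∀ A : Set Y, κ A < ENNReal.ofReal δ →
      ∫⁻ x in A ×ˢ (Set.univ : Set Z), F x ∂(κ.prod ν) ≤ ε := by
  rw [lintegral_prod _ hF.aemeasurable] at hfin
  obtain ⟨d, hd, hd'⟩ := exists_pos_setLIntegral_lt_of_measure_lt hfin.ne hε.ne'
  obtain ⟨δ, hδ, hδd⟩ := ENNReal.lt_iff_exists_nnreal_btwn.1 hd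
  refine ⟨δ, by exact_mod_cast hδ, fun A hA => ?_⟩
  rw [ENNReal.ofReal_coe_nnreal] at hA
  rw [← Measure.prod_restrict, Measure.restrict_univ, lintegral_prod _ hF.aemeasurable]
  exact (hd' A (hA.trans hδd)).le

/-- Uniform absolute continuity: for every m and η > 0 there is δ̃ > 0 such that for all
Borel A ⊆ [0,T] with λ(A) < δ̃, sup over g ∈ S₂ᵐ of ∫_{A×Z} h |g − 1| dμ ≤ η. -/
theorem sup_lintegral_mul_abs_sub_one_small_time_set
    {Z : Type*} [TopologicalSpace Z] [PolishSpace Z] [LocallyCompactSpace Z]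
    [MeasurableSpace Z] [BorelSpace Z]
    (ν : Measure Z) [SigmaFinite ν] (T : ℝ) (hT : 0 < T)
    (μ : Measure (ℝ × Z)) (hμ : μ = (volume.restrict (Set.Icc 0 T)).prod ν)
    (h : ℝ × Z → ℝ) (hmeas : Measurable h) (hnonneg : ∀ x, 0 ≤ h x)
    (hL2 : ∫⁻ x, ENNReal.ofReal ((h x) ^ 2) ∂μ < ⊤)
    (hexp : ∀ δ : ℝ, 0 < δ → ∀ E : Set (ℝ × Z), MeasurableSet E → μ E < ⊤ →
      ∫⁻ x in E, ENNReal.ofReal (Real.exp (δ * h x)) ∂μ < ⊤) :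
    ∀ m : ℕ, ∀ η : ℝ, 0 < η → ∃ δt : ℝ, 0 < δt ∧
      ∀ A : Set ℝ, MeasurableSet A → A ⊆ Set.Icc 0 T →
        volume A < ENNReal.ofReal δt →
        ∀ g : ℝ × Z → ℝ, Measurable g → (∀ x, 0 ≤ g x) →
          (∫⁻ x, ENNReal.ofReal (ell (g x)) ∂μ) ≤ (m : ℝ≥0∞) →
          ∫⁻ x in A ×ˢ (Set.univ : Set Z), ENNReal.ofReal (h x * |g x - 1|) ∂μ
            ≤ ENNReal.ofReal η := by
  intro m η hη
  -- The `+ 1` keeps `σ` positive when `m = 0`.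
  set σ : ℝ := 2 * m / η + 1 with hσdef
  have hσ : 0 < σ := by positivity
  have hmσ : σ⁻¹ * m ≤ η / 2 := by
    rw [inv_mul_le_iff₀ hσ, hσdef]
    have : (2 * m / η + 1) * (η / 2) = m + η / 2 := by field_simp
    linarith
  let F : ℝ × Z → ℝ≥0∞ := fun x => ENNReal.ofReal (Real.exp (σ * h x) - 1 - σ * h x)
  have hF : Measurable F := by fun_prop
  have hFfin := lintegral_exp_sub_lt_top μ h hmeas hnonneg hL2 hexp σ hσ
  subst hμ
  obtain ⟨δ, hδ, hδ'⟩ := exists_pos_setLIntegral_prod_univ_le _ ν F hF hFfin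
    (ENNReal.ofReal (σ * (η / 2))) (ENNReal.ofReal_pos.2 (by positivity))
  refine ⟨δ, hδ, fun A _ _ hAδ g _ hg0 hgm => ?_⟩
  have hFA := hδ' A ((Measure.restrict_apply_le _ _).trans_lt hAδ)
  generalize (volume.restrict (Set.Icc 0 T)).prod ν = μ at *
  have hσi : (0 : ℝ) ≤ σ⁻¹ := by positivity
  calc ∫⁻ x in A ×ˢ (Set.univ : Set Z), ENNReal.ofReal (h x * |g x - 1|) ∂μ
      ≤ ∫⁻ x in A ×ˢ (Set.univ : Set Z),
          ENNReal.ofReal σ⁻¹ * (ENNReal.ofReal (ell (g x)) + F x) ∂μ := by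
        refine lintegral_mono fun x => ?_
        rw [← ENNReal.ofReal_add (ell_nonneg _ (hg0 x)) (exp_sub_one_sub_nonneg _),
          ← ENNReal.ofReal_mul hσi]
        refine ENNReal.ofReal_le_ofReal ?_
        rw [le_inv_mul_iff₀ hσ, ← mul_assoc]
        exact mul_abs_sub_one_le _ _ (mul_nonneg hσ.le (hnonneg x)) (hg0 x)
    _ = ENNReal.ofReal σ⁻¹ * (∫⁻ x in A ×ˢ (Set.univ : Set Z), ENNReal.ofReal (ell (g x)) ∂μ
          + ∫⁻ x in A ×ˢ (Set.univ : Set Z), F x ∂μ) := by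
        rw [lintegral_const_mul' _ _ ENNReal.ofReal_ne_top, lintegral_add_right _ hF]
    _ ≤ ENNReal.ofReal σ⁻¹ * (ENNReal.ofReal m + ENNReal.ofReal (σ * (η / 2))) := by
        rw [ENNReal.ofReal_natCast]
        gcongr
        exact (setLIntegral_le_lintegral _ _).trans hgm
    _ ≤ ENNReal.ofReal η := by
        rw [← ENNReal.ofReal_add (by positivity) (by positivity), ← ENNReal.ofReal_mul hσi]
        refine ENNReal.ofReal_le_ofReal ?_
        rw [mul_add, inv_mul_cancel_left₀ hσ.ne']
        linarith
end

section
/- Let K₀, K, K₁ be real Banach spaces with K₀ and K₁ reflexive, let j₀ : K₀ → K be an injective compact continuous linear map, and let j₁ : K → K₁ be an injective continuous linear map. Fix T > 0, p ∈ (1,∞) and β ∈ (0,1). Let (u_n) be a sequence of strongly measurable functions u_n : [0,T] → K₀ such that sup_n ( ∫₀ᵀ ‖u_n(t)‖_{K₀}^p dt + ∫₀ᵀ ∫₀ᵀ ‖j₁(j₀(u_n(t))) − j₁(j₀(u_n(s)))‖_{K₁}^p / |t − s|^{1 + βp} dt ds ) < ∞. Then there exist a subsequence (u_{n_k}) and a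 strongly measurable function u : [0,T] → K with ∫₀ᵀ ‖u(t)‖_K^p dt < ∞ such that ∫₀ᵀ ‖j₀(u_{n_k}(t)) − u(t)‖_K^p dt → 0 as k → ∞. -/
/-!
The sequence `j₀ ∘ u n` is shown to be totally bounded in the complete space `L^p([0,T], K)`.

Split `[0,T]` into `N + 1` cells of length `h = T / (N + 1)` and replace `j₀ ∘ u n` by its average on
each cell. The averages of `u n` lie in a ball of `K₀` whose radius depends on `h` but not on `n`, so
their images under `j₀` lie in a fixed compact set, and the resulting step functions lie in a compact
subset of `L^p` (`isCompact_stepFunctions`). It remains to see that the error of this replacement is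
small uniformly in `n` (`averaging_error`). By Jensen (`enorm_sub_integral_rpow_le`) its `p`-th power
is at most the cellwise mean of `‖j₀ (u t - u s)‖ ^ p`, and Ehrling's inequality (`ehrling_rpow`)
bounds the integrand by `ε ‖u t - u s‖ ^ p + C ‖j₁ (j₀ (u t - u s))‖ ^ p`. The first term contributes
at most `ε 2 ^ p M`. In the second, `|t - s| ≤ h` on a cell, so the fractional seminorm bounds its
contribution by `C h ^ (β p) M`. Choose `ε` first, then `N`.
-/
open MeasureTheory
open scoped ENNReal

open scoped NNReal ProbabilityTheory Topology

/-- Ehrling's inequality, for `p`-th powers of norms: where `‖j₀ x‖ ^ p ≥ ε` on the unit sphere of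
`K₀`, the image `j₀ x` stays in a compact set avoiding `0`, on which `‖j₁ ·‖` is
bounded away from zero. -/
lemma ehrling_rpow {K₀ K K₁ : Type*}
    [NormedAddCommGroup K₀] [NormedSpace ℝ K₀]
    [NormedAddCommGroup K] [NormedSpace ℝ K]
    [NormedAddCommGroup K₁] [NormedSpace ℝ K₁]
    (j₀ : K₀ →L[ℝ] K) (hj₀cpt : IsCompactOperator j₀)
    (j₁ : K →L[ℝ] K₁) (hj₁inj : Function.Injective j₁)
    {p : ℝ} (hp : 0 < p) (ε : ℝ≥0) (hε : 0 < ε) :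
    ∃ C : ℝ≥0, ∀ x : K₀, ‖j₀ x‖ₑ ^ p ≤ ε * ‖x‖ₑ ^ p + C * ‖j₁ (j₀ x)‖ₑ ^ p := by
  -- It suffices to treat unit vectors; there the real-valued inequality is a compactness argument.
  obtain ⟨C, hC⟩ : ∃ C : ℝ≥0, ∀ x : K₀, ‖x‖ = 1 →
      ‖j₀ x‖ ^ p ≤ ε + C * ‖j₁ (j₀ x)‖ ^ p := by
    have hQ : IsCompact (closure (j₀ '' Metric.closedBall 0 1)) :=
      IsCompactOperator.isCompact_closure_image_closedBall (f := j₀.toLinearMap) hj₀cpt 1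
    have hS : IsCompact (closure (j₀ '' Metric.closedBall 0 1) ∩ {y | (ε : ℝ) ≤ ‖y‖ ^ p}) :=
      hQ.inter_right (isClosed_le continuous_const
        (continuous_norm.rpow_const fun _ => Or.inr hp.le))
    have hbound : ContinuousOn (fun y : K => ‖y‖ ^ p / ‖j₁ y‖ ^ p)
        (closure (j₀ '' Metric.closedBall 0 1) ∩ {y | (ε : ℝ) ≤ ‖y‖ ^ p}) := by
      refine ContinuousOn.div
        (continuous_norm.rpow_const fun _ => Or.inr hp.le).continuousOn
        (j₁.continuous.norm.rpow_const fun _ => Or.inr hp.le).continuousOn ?_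
      rintro y ⟨-, hy⟩ h0
      rw [Real.rpow_eq_zero (norm_nonneg _) hp.ne', norm_eq_zero] at h0
      have : y = 0 := hj₁inj (by simpa using h0)
      subst this
      simp only [Set.mem_ofPred_eq, norm_zero, Real.zero_rpow hp.ne'] at hy
      exact absurd hy (not_le.2 (by exact_mod_cast hε))
    obtain ⟨C, hC⟩ := (hS.image_of_continuousOn hbound).bddAbove
    refine ⟨C.toNNReal, fun x hx => ?_⟩
    by_cases hlt : ‖j₀ x‖ ^ p < ε
    · have : 0 ≤ (C.toNNReal : ℝ) * ‖j₁ (j₀ x)‖ ^ p := by positivity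
      linarith
    · have hmem : j₀ x ∈ closure (j₀ '' Metric.closedBall 0 1) ∩ {y | (ε : ℝ) ≤ ‖y‖ ^ p} :=
        ⟨subset_closure ⟨x, by simp [hx], rfl⟩, not_lt.1 hlt⟩
      have h1 : ‖j₀ x‖ ^ p / ‖j₁ (j₀ x)‖ ^ p ≤ C := hC ⟨_, hmem, rfl⟩
      have h2 : 0 < ‖j₁ (j₀ x)‖ ^ p := by
        apply Real.rpow_pos_of_pos
        rw [norm_pos_iff]
        intro h0
        have : j₀ x = 0 := hj₁inj (by simpa using h0)
        rw [this, norm_zero, Real.zero_rpow hp.ne'] at hlt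
        exact hlt (by exact_mod_cast hε)
      rw [div_le_iff₀ h2] at h1
      have h3 : C * ‖j₁ (j₀ x)‖ ^ p ≤ C.toNNReal * ‖j₁ (j₀ x)‖ ^ p := by
        gcongr
        exact Real.le_coe_toNNReal C
      have : (0 : ℝ) ≤ ε := ε.2
      linarith
  refine ⟨C, fun x => ?_⟩
  have key : ‖j₀ x‖ ^ p ≤ ε * ‖x‖ ^ p + C * ‖j₁ (j₀ x)‖ ^ p := by
    by_cases hx : x = 0
    · simp [hx, Real.zero_rpow hp.ne']
    have hx' : 0 < ‖x‖ := norm_pos_iff.2 hx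
    have h := hC (‖x‖⁻¹ • x) (by rw [norm_smul, norm_inv, norm_norm, inv_mul_cancel₀ hx'.ne'])
    simp only [map_smul, norm_smul, norm_inv, norm_norm] at h
    rw [Real.mul_rpow (by positivity) (norm_nonneg _), Real.mul_rpow (by positivity) (norm_nonneg _),
      Real.inv_rpow hx'.le] at h
    have hxp : 0 < ‖x‖ ^ p := Real.rpow_pos_of_pos hx' p
    calc ‖j₀ x‖ ^ p = ‖x‖ ^ p * ((‖x‖ ^ p)⁻¹ * ‖j₀ x‖ ^ p) := by field_simp
      _ ≤ ‖x‖ ^ p * (ε + C * ((‖x‖ ^ p)⁻¹ * ‖j₁ (j₀ x)‖ ^ p)) := by gcongr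
      _ = _ := by field_simp
  have := ENNReal.ofReal_le_ofReal key
  rw [ENNReal.ofReal_add (by positivity) (by positivity), ENNReal.ofReal_mul (by positivity),
    ENNReal.ofReal_mul (by positivity)] at this
  simpa only [← ENNReal.ofReal_rpow_of_nonneg (norm_nonneg _) hp.le, ofReal_norm,
    ENNReal.ofReal_coe_nnreal] using this

/-- Jensen's inequality for the distance from a point to a mean. -/
lemma enorm_sub_integral_rpow_le {α E : Type*} [MeasurableSpace α] [NormedAddCommGroup E]
    [NormedSpace ℝ E] [CompleteSpace E] (ν : Measure α) [IsProbabilityMeasure ν] {f : α → E}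
    (hf : Integrable f ν) {p : ℝ} (hp : 1 ≤ p) (x : E) :
    ‖x - ∫ s, f s ∂ν‖ₑ ^ p ≤ ∫⁻ s, ‖x - f s‖ₑ ^ p ∂ν := by
  have hp0 : 0 < p := by linarith
  have hpe : ENNReal.ofReal p ≠ 0 := by simpa using hp0
  have h1 : x - ∫ s, f s ∂ν = ∫ s, (x - f s) ∂ν := by
    rw [integral_sub (integrable_const x) hf]; simp
  have hm : AEStronglyMeasurable (fun s => x - f s) ν :=
    aestronglyMeasurable_const.sub hf.aestronglyMeasurable
  have h2 : ‖x - ∫ s, f s ∂ν‖ₑ ≤ (∫⁻ s, ‖x - f s‖ₑ ^ p ∂ν) ^ (1 / p) := by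
    calc ‖x - ∫ s, f s ∂ν‖ₑ ≤ ∫⁻ s, ‖x - f s‖ₑ ∂ν := by
          rw [h1]; exact enorm_integral_le_lintegral_enorm _
      _ = eLpNorm (fun s => x - f s) 1 ν := eLpNorm_one_eq_lintegral_enorm.symm
      _ ≤ eLpNorm (fun s => x - f s) (ENNReal.ofReal p) ν :=
          eLpNorm_le_eLpNorm_of_exponent_le (by simpa using hp) hm
      _ = _ := by
          rw [eLpNorm_eq_lintegral_rpow_enorm_toReal hpe ENNReal.ofReal_ne_top,
            ENNReal.toReal_ofReal hp0.le]
  calc _ ≤ ((∫⁻ s, ‖x - f s‖ₑ ^ p ∂ν) ^ (1 / p)) ^ p := by gcongr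
    _ = _ := by rw [← ENNReal.rpow_mul, one_div, inv_mul_cancel₀ hp0.ne', ENNReal.rpow_one]

/-- Averaging over the cells of a finite partition preserves integrals. -/
lemma lintegral_lintegral_cond {α ι : Type*} [MeasurableSpace α] [Fintype ι] [MeasurableSpace ι]
    [MeasurableSingletonClass ι] (μ : Measure α) [IsFiniteMeasure μ] {idx : α → ι}
    (hidx : Measurable idx) (hpos : ∀ i, μ (idx ⁻¹' {i}) ≠ 0) (f : α → ℝ≥0∞) :
    ∫⁻ t, ∫⁻ s, f s ∂(μ[|idx ⁻¹' {idx t}]) ∂μ = ∫⁻ t, f t ∂μ := by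
  have hms : ∀ i, MeasurableSet (idx ⁻¹' {i}) := fun i => hidx (measurableSet_singleton i)
  rw [← lintegral_map (μ := μ) (f := fun i => ∫⁻ s, f s ∂(μ[|idx ⁻¹' {i}]))
    (measurable_of_finite _) hidx, lintegral_fintype]
  have hterm : ∀ i, (∫⁻ s, f s ∂(μ[|idx ⁻¹' {i}])) * μ.map idx {i}
      = ∫⁻ s in idx ⁻¹' {i}, f s ∂μ := by
    intro i
    rw [Measure.map_apply hidx (measurableSet_singleton i), ProbabilityTheory.cond,
      lintegral_smul_measure, smul_eq_mul, mul_comm, ← mul_assoc,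
      ENNReal.mul_inv_cancel (hpos i) (measure_ne_top _ _), one_mul]
  simp_rw [hterm]
  rw [← lintegral_biUnion_finset (fun i _ j _ hij => ?_) (fun i _ => hms i)]
  · have : (⋃ i ∈ (Finset.univ : Finset ι), idx ⁻¹' {i}) = Set.univ := by
      ext t; simp
    rw [this, Measure.restrict_univ]
  · exact Disjoint.preimage idx (by simpa using hij)

/-- The `L^p` error made by replacing `A ∘ u` by its averages over the cells of a finite partition
whose cells have measure at least `h` and diameter at most `h`, when `A` and `B` satisfy an
Ehrling-type inequality. Here `μ[|s]` is the normalised restriction of `μ` to `s`, so the integral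
against it is the average over `s`. -/
lemma averaging_error {K₀ K K₁ ι : Type*}
    [NormedAddCommGroup K₀] [NormedSpace ℝ K₀] [CompleteSpace K₀]
    [NormedAddCommGroup K] [NormedSpace ℝ K] [CompleteSpace K]
    [NormedAddCommGroup K₁] [NormedSpace ℝ K₁]
    [Fintype ι] [MeasurableSpace ι] [MeasurableSingletonClass ι]
    (A : K₀ →L[ℝ] K) (B : K₀ →L[ℝ] K₁) {p β : ℝ} (hp : 1 ≤ p) (hβ : 0 < β) {ε C : ℝ≥0}
    (hAB : ∀ x, ‖A x‖ₑ ^ p ≤ ε * ‖x‖ₑ ^ p + C * ‖B x‖ₑ ^ p)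
    (μ : Measure ℝ) [IsFiniteMeasure μ] {idx : ℝ → ι} (hidx : Measurable idx)
    {h : ℝ} (hh : 0 < h) (hcell : ∀ i, ENNReal.ofReal h ≤ μ (idx ⁻¹' {i}))
    (hdiam : ∀ᵐ t ∂μ, ∀ᵐ s ∂μ, idx s = idx t → |t - s| ≤ h)
    {u : ℝ → K₀} (hu : AEStronglyMeasurable u μ) (hint : Integrable u μ) {M : ℝ≥0∞}
    (hM₀ : ∫⁻ t, ‖u t‖ₑ ^ p ∂μ ≤ M)
    (hM₁ : ∫⁻ t, ∫⁻ s, ENNReal.ofReal (‖B (u t) - B (u s)‖ ^ p / |t - s| ^ (1 + β * p)) ∂μ ∂μ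
      ≤ M) :
    ∫⁻ t, ‖A (u t) - A (∫ s, u s ∂(μ[|idx ⁻¹' {idx t}]))‖ₑ ^ p ∂μ
      ≤ ε * (2 ^ p * M) + ENNReal.ofReal h ^ (β * p) * (C * M) := by
  have hp0 : 0 < p := by linarith
  have hh' : ENNReal.ofReal h ≠ 0 := by simpa using hh
  have hpos : ∀ i, μ (idx ⁻¹' {i}) ≠ 0 := fun i h0 => by
    have := hcell i
    rw [h0] at this
    exact hh' (le_antisymm this bot_le)
  have hprob : ∀ i, IsProbabilityMeasure (μ[|idx ⁻¹' {i}]) := fun i =>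
    ProbabilityTheory.cond_isProbabilityMeasure (hpos i)
  have hac : ∀ i, μ[|idx ⁻¹' {i}] ≪ μ := fun i => ProbabilityTheory.cond_absolutelyContinuous
  have hup : AEMeasurable (fun t => ‖u t‖ₑ ^ p) μ := hu.enorm.pow_const p
  set c : ℝ≥0∞ := ε * 2 ^ (p - 1) with hc
  -- Jensen on each cell, followed by the interpolation inequality for the difference.
  have hpt : ∀ t, ‖A (u t) - A (∫ s, u s ∂(μ[|idx ⁻¹' {idx t}]))‖ₑ ^ p
      ≤ c * ‖u t‖ₑ ^ p + (c * (∫⁻ s, ‖u s‖ₑ ^ p ∂(μ[|idx ⁻¹' {idx t}])) +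
        C * ∫⁻ s, ‖B (u t) - B (u s)‖ₑ ^ p ∂(μ[|idx ⁻¹' {idx t}])) := by
    intro t
    have hi : Integrable u (μ[|idx ⁻¹' {idx t}]) := by
      rw [ProbabilityTheory.cond]
      exact hint.restrict.smul_measure (by simpa using hpos _)
    rw [← A.integral_comp_comm hi]
    refine (enorm_sub_integral_rpow_le _ (A.integrable_comp hi) hp _).trans ?_
    calc ∫⁻ s, ‖A (u t) - A (u s)‖ₑ ^ p ∂(μ[|idx ⁻¹' {idx t}])
        ≤ ∫⁻ s, (c * ‖u t‖ₑ ^ p + (c * ‖u s‖ₑ ^ p + C * ‖B (u t) - B (u s)‖ₑ ^ p))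
            ∂(μ[|idx ⁻¹' {idx t}]) := by
          refine lintegral_mono fun s => ?_
          rw [← map_sub, ← map_sub]
          refine (hAB _).trans ?_
          rw [← add_assoc, ← mul_add, hc, mul_assoc]
          gcongr
          exact (ENNReal.rpow_le_rpow (enorm_sub_le) hp0.le).trans
            (ENNReal.rpow_add_le_mul_rpow_add_rpow _ _ hp)
      _ = _ := by
          have hm : AEMeasurable (fun s => ‖u s‖ₑ ^ p) (μ[|idx ⁻¹' {idx t}]) :=
            hup.mono_ac (hac _)
          rw [lintegral_add_left' aemeasurable_const, lintegral_add_left' (hm.const_mul c),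
            lintegral_const, measure_univ, mul_one, lintegral_const_mul'' c hm,
            lintegral_const_mul' _ _ ENNReal.coe_ne_top]
  -- On a cell the weight `|t - s| ^ (1 + β p)` is at most `h ^ (1 + β p)`.
  have hw : ∀ᵐ t ∂μ, ∫⁻ s, ‖B (u t) - B (u s)‖ₑ ^ p ∂(μ[|idx ⁻¹' {idx t}])
      ≤ ENNReal.ofReal h ^ (β * p) *
        ∫⁻ s, ENNReal.ofReal (‖B (u t) - B (u s)‖ ^ p / |t - s| ^ (1 + β * p)) ∂μ := by
    filter_upwards [hdiam] with t ht
    have hle : ∫⁻ s in idx ⁻¹' {idx t}, ‖B (u t) - B (u s)‖ₑ ^ p ∂μ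
        ≤ ∫⁻ s in idx ⁻¹' {idx t}, ENNReal.ofReal h ^ (1 + β * p) *
          ENNReal.ofReal (‖B (u t) - B (u s)‖ ^ p / |t - s| ^ (1 + β * p)) ∂μ := by
      refine lintegral_mono_ae ?_
      rw [ae_restrict_iff' (hidx (measurableSet_singleton _))]
      filter_upwards [ht] with s hs hmem
      have hs := hs hmem
      rw [ENNReal.ofReal_rpow_of_nonneg hh.le (by positivity),
        ← ENNReal.ofReal_mul (by positivity), ← ofReal_norm,
        ENNReal.ofReal_rpow_of_nonneg (norm_nonneg _) hp0.le]
      apply ENNReal.ofReal_le_ofReal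
      rcases eq_or_ne t s with rfl | hne
      · simp [Real.zero_rpow hp0.ne']
      · have hts : 0 < |t - s| := abs_pos.2 (sub_ne_zero.2 hne)
        rw [← mul_div_assoc, le_div_iff₀ (Real.rpow_pos_of_pos hts _), mul_comm]
        gcongr
    rw [ProbabilityTheory.cond, lintegral_smul_measure, smul_eq_mul]
    calc _ ≤ (ENNReal.ofReal h)⁻¹ * (ENNReal.ofReal h ^ (1 + β * p) *
          ∫⁻ s, ENNReal.ofReal (‖B (u t) - B (u s)‖ ^ p / |t - s| ^ (1 + β * p)) ∂μ) := by
          gcongr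
          · exact hcell _
          · refine hle.trans ?_
            rw [lintegral_const_mul' _ _
              (ENNReal.rpow_ne_top_of_nonneg (by positivity) ENNReal.ofReal_ne_top)]
            gcongr
            exact Measure.restrict_le_self
      _ = _ := by
          rw [ENNReal.rpow_add _ _ hh' ENNReal.ofReal_ne_top, ENNReal.rpow_one, ← mul_assoc,
            ← mul_assoc, ENNReal.inv_mul_cancel hh' ENNReal.ofReal_ne_top, one_mul]
  have hcM : AEMeasurable (fun t => c * (∫⁻ s, ‖u s‖ₑ ^ p ∂(μ[|idx ⁻¹' {idx t}]))) μ :=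
    ((measurable_of_finite fun i => c * ∫⁻ s, ‖u s‖ₑ ^ p ∂(μ[|idx ⁻¹' {i}])).comp
      hidx).aemeasurable
  have hct : c ≠ ⊤ := ENNReal.mul_ne_top ENNReal.coe_ne_top
    (ENNReal.rpow_ne_top_of_nonneg (by linarith) (by simp))
  calc _ ≤ ∫⁻ t, (c * ‖u t‖ₑ ^ p + (c * (∫⁻ s, ‖u s‖ₑ ^ p ∂(μ[|idx ⁻¹' {idx t}])) +
        C * ∫⁻ s, ‖B (u t) - B (u s)‖ₑ ^ p ∂(μ[|idx ⁻¹' {idx t}]))) ∂μ := lintegral_mono hpt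
    _ = c * ∫⁻ t, ‖u t‖ₑ ^ p ∂μ + (c * ∫⁻ t, ‖u t‖ₑ ^ p ∂μ +
        C * ∫⁻ t, ∫⁻ s, ‖B (u t) - B (u s)‖ₑ ^ p ∂(μ[|idx ⁻¹' {idx t}]) ∂μ) := by
        rw [lintegral_add_left' (hup.const_mul c), lintegral_add_left' hcM,
          lintegral_const_mul' _ _ hct, lintegral_const_mul' _ _ hct,
          lintegral_const_mul' _ _ ENNReal.coe_ne_top, lintegral_lintegral_cond μ hidx hpos]
    _ ≤ c * M + (c * M + C * (ENNReal.ofReal h ^ (β * p) * M)) := by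
        gcongr
        refine (lintegral_mono_ae hw).trans ?_
        rw [lintegral_const_mul' _ _
          (ENNReal.rpow_ne_top_of_nonneg (by positivity) ENNReal.ofReal_ne_top)]
        gcongr
    _ = _ := by
        have h2 : (2 : ℝ≥0∞) ^ p = 2 ^ (p - 1) * 2 := by
          conv_rhs => rw [← ENNReal.rpow_one 2, ← ENNReal.rpow_mul,
            ← ENNReal.rpow_add _ _ (by simp) (by simp)]
          congr 1; ring
        rw [hc, h2]; ring

/-- Uniform partition of `[0,T]` into `N + 1` cells. The index is truncated at `N`, so that the
last cell contains the endpoint `T`. -/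
lemma exists_uniform_partition {T : ℝ} (hT : 0 < T) (N : ℕ) :
    ∃ idx : ℝ → Fin (N + 1), Measurable idx ∧
      (∀ i, ENNReal.ofReal (T / (N + 1)) ≤ (volume.restrict (Set.Icc 0 T)) (idx ⁻¹' {i})) ∧
      ∀ᵐ t ∂(volume.restrict (Set.Icc 0 T)), ∀ᵐ s ∂(volume.restrict (Set.Icc 0 T)),
        idx s = idx t → |t - s| ≤ T / (N + 1) := by
  have hN : (0 : ℝ) < N + 1 := by positivity
  set h : ℝ := T / (N + 1) with hh
  have hpos : 0 < h := by positivity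
  have hTh : T = (N + 1) * h := by rw [hh]; field_simp
  have hmeas : Measurable (fun t : ℝ => ⌊t / h⌋₊) :=
    Nat.measurable_floor.comp (measurable_id.div_const h)
  refine ⟨fun t => ⟨min ⌊t / h⌋₊ N, by omega⟩, ?_, ?_, ?_⟩
  · exact (measurable_from_top (f := fun n : ℕ => (⟨min n N, by omega⟩ : Fin (N + 1)))).comp hmeas
  · intro i
    rw [Measure.restrict_apply']
    swap
    · exact measurableSet_Icc
    calc ENNReal.ofReal h = volume (Set.Ico (i * h) ((i + 1) * h)) := by
          rw [Real.volume_Ico]; congr 1; ring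
      _ ≤ _ := by
          apply measure_mono
          rintro t ⟨h1, h2⟩
          have hi : ((i : ℕ) : ℝ) + 1 ≤ N + 1 := by exact_mod_cast i.2
          have h0 : 0 ≤ t := le_trans (by positivity) h1
          have hfl : ⌊t / h⌋₊ = i := by
            rw [Nat.floor_eq_iff (by positivity)]
            exact ⟨by rwa [le_div_iff₀ hpos], by rwa [div_lt_iff₀ hpos]⟩
          refine ⟨?_, h0, ?_⟩
          · simp only [Set.mem_preimage, Set.mem_singleton_iff, hfl]
            ext; simp; omega
          · rw [hTh]; nlinarith
  · have hcell : ∀ t ∈ Set.Icc 0 T, (min ⌊t / h⌋₊ N : ℕ) * h ≤ t ∧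
        t ≤ ((min ⌊t / h⌋₊ N : ℕ) + 1) * h := by
      rintro t ⟨h0, h1⟩
      have hf := Nat.floor_le (div_nonneg h0 hpos.le)
      have hf' := (Nat.lt_floor_add_one (t / h)).le
      rw [le_div_iff₀ hpos] at hf
      rw [div_le_iff₀ hpos] at hf'
      rcases le_total ⌊t / h⌋₊ N with hle | hle
      · rw [min_eq_left hle]; exact ⟨hf, hf'⟩
      · rw [min_eq_right hle]
        refine ⟨le_trans ?_ hf, hTh ▸ h1⟩
        gcongr
    filter_upwards [ae_restrict_mem measurableSet_Icc] with t ht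
    filter_upwards [ae_restrict_mem measurableSet_Icc] with s hs heq
    have heq' : min ⌊s / h⌋₊ N = min ⌊t / h⌋₊ N := congrArg Fin.val heq
    have h1 := hcell t ht
    have h2 := hcell s hs
    rw [heq'] at h2
    rw [abs_le]
    constructor <;> nlinarith

/-- Step functions over a fixed finite partition with values in a compact set form a compact subset
of `L^p`: they are the image of a finite power of that set under a Lipschitz map. -/
lemma isCompact_stepFunctions {α ι K : Type*} [MeasurableSpace α] [Fintype ι] [MeasurableSpace ι]
    [MeasurableSingletonClass ι] [NormedAddCommGroup K] (μ : Measure α) [IsFiniteMeasure μ]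
    (P : ℝ≥0∞) [Fact (1 ≤ P)] {idx : α → ι} (hidx : Measurable idx) {Q : Set K}
    (hQ : IsCompact Q) :
    ∃ Φ : (ι → K) → Lp K P μ, (∀ c, Φ c =ᵐ[μ] fun t => c (idx t)) ∧
      IsCompact (Φ '' Set.univ.pi fun _ => Q) := by
  have hm : ∀ c : ι → K, MemLp (fun t => c (idx t)) P μ := fun c =>
    MemLp.of_bound ((StronglyMeasurable.of_discrete (f := c)).comp_measurable
      hidx).aestronglyMeasurable ‖c‖ (Filter.Eventually.of_forall fun t => norm_le_pi_norm c _)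
  refine ⟨fun c => (hm c).toLp, fun c => (hm c).coeFn_toLp, ?_⟩
  refine (isCompact_univ_pi fun _ => hQ).image ?_
  refine (LipschitzWith.of_dist_le_mul (K := measureUnivNNReal μ ^ P.toReal⁻¹)
    fun c c' => ?_).continuous
  rw [dist_eq_norm, dist_eq_norm, ← MemLp.toLp_sub, NNReal.coe_rpow]
  refine Lp.norm_le_of_ae_bound (norm_nonneg _) ?_
  filter_upwards [((hm c).sub (hm c')).coeFn_toLp] with t ht
  rw [ht]
  exact norm_le_pi_norm (c - c') (idx t)

/-- Fractional Sobolev (Aubin–Lions type) compactness: a sequence bounded in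
L^p([0,T],K₀) with a uniform W^{β,p}([0,T],K₁) seminorm bound has a subsequence
converging in L^p([0,T],K). Reflexivity is expressed by surjectivity of the canonical
embedding into the bidual; K₀ ↪ K is a compact injection and K ↪ K₁ a continuous
injection. -/
theorem aubin_lions_fractional
    {K₀ K K₁ : Type*}
    [NormedAddCommGroup K₀] [NormedSpace ℝ K₀] [CompleteSpace K₀]
    [NormedAddCommGroup K] [NormedSpace ℝ K] [CompleteSpace K]
    [NormedAddCommGroup K₁] [NormedSpace ℝ K₁] [CompleteSpace K₁]
    (hrefl₀ : Function.Surjective (NormedSpace.inclusionInDoubleDual ℝ K₀))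
    (hrefl₁ : Function.Surjective (NormedSpace.inclusionInDoubleDual ℝ K₁))
    (j₀ : K₀ →L[ℝ] K) (hj₀inj : Function.Injective j₀)
    (hj₀cpt : IsCompactOperator j₀)
    (j₁ : K →L[ℝ] K₁) (hj₁inj : Function.Injective j₁)
    (T : ℝ) (hT : 0 < T) (p : ℝ) (hp : 1 < p) (β : ℝ) (hβ : 0 < β) (hβ1 : β < 1)
    (u : ℕ → ℝ → K₀)
    (humeas : ∀ n, AEStronglyMeasurable (u n) (volume.restrict (Set.Icc 0 T)))
    (hbdd : ∃ M : ℝ≥0∞, M ≠ ⊤ ∧ ∀ n,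
      (∫⁻ t in Set.Icc 0 T, ENNReal.ofReal (‖u n t‖ ^ p)) +
        (∫⁻ t in Set.Icc 0 T, ∫⁻ s in Set.Icc 0 T,
          ENNReal.ofReal (‖j₁ (j₀ (u n t)) - j₁ (j₀ (u n s))‖ ^ p
            / |t - s| ^ (1 + β * p))) ≤ M) :
    ∃ φ : ℕ → ℕ, StrictMono φ ∧ ∃ v : ℝ → K,
      AEStronglyMeasurable v (volume.restrict (Set.Icc 0 T)) ∧
      (∫⁻ t in Set.Icc 0 T, ENNReal.ofReal (‖v t‖ ^ p)) < ⊤ ∧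
      Filter.Tendsto
        (fun k => ∫⁻ t in Set.Icc 0 T, ENNReal.ofReal (‖j₀ (u (φ k) t) - v t‖ ^ p))
        Filter.atTop (nhds 0) := by
  obtain ⟨M, hMtop, hM⟩ := hbdd
  have hp0 : 0 < p := by linarith
  have hconv₀ : ∀ x : K₀, ENNReal.ofReal (‖x‖ ^ p) = ‖x‖ₑ ^ p := fun x => by
    rw [← ENNReal.ofReal_rpow_of_nonneg (norm_nonneg _) hp0.le, ofReal_norm]
  have hconvK : ∀ x : K, ENNReal.ofReal (‖x‖ ^ p) = ‖x‖ₑ ^ p := fun x => by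
    rw [← ENNReal.ofReal_rpow_of_nonneg (norm_nonneg _) hp0.le, ofReal_norm]
  simp only [hconvK]
  set μ : Measure ℝ := volume.restrict (Set.Icc 0 T) with hμ
  have hM₀ : ∀ n, ∫⁻ t, ‖u n t‖ₑ ^ p ∂μ ≤ M := fun n => by
    simpa only [hconv₀] using le_self_add.trans (hM n)
  have hM₁ : ∀ n, ∫⁻ t, ∫⁻ s, ENNReal.ofReal (‖(j₁.comp j₀) (u n t) - (j₁.comp j₀) (u n s)‖ ^ p
      / |t - s| ^ (1 + β * p)) ∂μ ∂μ ≤ M := fun n => le_add_self.trans (hM n)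
  set P : ℝ≥0∞ := ENNReal.ofReal p with hP
  have hP0 : P ≠ 0 := by simpa [hP] using hp0
  have hPtop : P ≠ ⊤ := ENNReal.ofReal_ne_top
  have hPreal : P.toReal = p := ENNReal.toReal_ofReal hp0.le
  have hP1 : 1 ≤ P := by simpa [hP] using hp.le
  have hfact : Fact (1 ≤ P) := ⟨hP1⟩
  have hLp : ∀ n, MemLp (u n) P μ := fun n => ⟨humeas n, by
    rw [eLpNorm_lt_top_iff_lintegral_rpow_enorm_lt_top hP0 hPtop, hPreal]
    exact (hM₀ n).trans_lt hMtop.lt_top⟩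
  have hint : ∀ n, Integrable (u n) μ := fun n => (hLp n).integrable hP1
  have hfLp : ∀ n, MemLp (fun t => j₀ (u n t)) P μ := fun n => j₀.comp_memLp' (hLp n)
  set f : ℕ → Lp K P μ := fun n => (hfLp n).toLp with hf
  -- Averaging over a fine partition is uniformly close to the identity on the sequence.
  have happrox : ∀ δ : ℝ≥0∞, δ ≠ 0 → ∃ S : Set (Lp K P μ), IsCompact S ∧
      ∀ n, ∃ g ∈ S, edist (f n) g ≤ δ ^ (1 / p) := by
    intro δ hδ
    have hδ2 : δ / 2 ≠ 0 := by simpa using hδ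
    obtain ⟨ε, hε, hεM⟩ := ENNReal.exists_nnreal_pos_mul_lt (a := 2 ^ p * M) (b := δ / 2)
      (ENNReal.mul_ne_top (ENNReal.rpow_ne_top_of_nonneg hp0.le (by simp)) hMtop) hδ2
    obtain ⟨C, hC⟩ := ehrling_rpow j₀ hj₀cpt j₁ hj₁inj hp0 ε hε
    obtain ⟨N, hN⟩ : ∃ N : ℕ,
        ENNReal.ofReal (T / (N + 1)) ^ (β * p) * (C * M) < δ / 2 := by
      have h1 : Filter.Tendsto (fun N : ℕ => T / ((N : ℝ) + 1)) Filter.atTop (𝓝 0) := by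
        simpa using (tendsto_one_div_add_atTop_nhds_zero_nat (𝕜 := ℝ)).const_mul T
          |>.congr fun N => by ring
      have h2 := ((ENNReal.continuous_rpow_const (y := β * p)).tendsto _).comp
        (ENNReal.tendsto_ofReal h1)
      have h3 := ENNReal.Tendsto.mul_const (b := (C : ℝ≥0∞) * M) h2
        (Or.inr (ENNReal.mul_ne_top ENNReal.coe_ne_top hMtop))
      rw [ENNReal.ofReal_zero, ENNReal.zero_rpow_of_pos (by positivity), zero_mul] at h3
      exact (h3.eventually_lt_const (pos_iff_ne_zero.2 hδ2)).exists
    obtain ⟨idx, hidx, hcell, hdiam⟩ := exists_uniform_partition hT N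
    have hh : 0 < T / ((N : ℝ) + 1) := by positivity
    set H : ℝ≥0∞ := ENNReal.ofReal (T / (N + 1)) with hH
    have hH0 : H ≠ 0 := by simpa [hH] using hh
    have hpos : ∀ i, μ (idx ⁻¹' {i}) ≠ 0 := fun i h0 =>
      hH0 (le_antisymm ((hcell i).trans_eq h0) bot_le)
    set R : ℝ≥0∞ := (H⁻¹ * M) ^ (1 / p) with hR
    have hRtop : R ≠ ⊤ := ENNReal.rpow_ne_top_of_nonneg (by positivity)
      (ENNReal.mul_ne_top (ENNReal.inv_ne_top.2 hH0) hMtop)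
    -- The cell averages of all `u n` lie in one ball of `K₀`.
    have hball : ∀ n i, (∫ s, u n s ∂(μ[|idx ⁻¹' {i}])) ∈ Metric.closedBall (0 : K₀) R.toReal := by
      intro n i
      have : IsProbabilityMeasure (μ[|idx ⁻¹' {i}]) :=
        ProbabilityTheory.cond_isProbabilityMeasure (hpos i)
      have hi : Integrable (u n) (μ[|idx ⁻¹' {i}]) := by
        rw [ProbabilityTheory.cond]
        exact (hint n).restrict.smul_measure (by simpa using hpos _)
      have h1 := enorm_sub_integral_rpow_le _ hi hp.le 0
      simp only [zero_sub, enorm_neg] at h1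
      have h2 : ∫⁻ s, ‖u n s‖ₑ ^ p ∂(μ[|idx ⁻¹' {i}]) ≤ H⁻¹ * M := by
        rw [ProbabilityTheory.cond, lintegral_smul_measure, smul_eq_mul]
        gcongr
        · exact hcell i
        · exact (lintegral_mono' Measure.restrict_le_self le_rfl).trans (hM₀ n)
      have h3 : ‖∫ s, u n s ∂(μ[|idx ⁻¹' {i}])‖ₑ ≤ R := by
        rw [hR, one_div, ENNReal.le_rpow_inv_iff hp0]
        exact h1.trans h2
      rw [mem_closedBall_zero_iff, ← toReal_enorm]
      exact ENNReal.toReal_mono hRtop h3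
    have hQ : IsCompact (closure (j₀ '' Metric.closedBall 0 R.toReal)) :=
      IsCompactOperator.isCompact_closure_image_closedBall (f := j₀.toLinearMap) hj₀cpt _
    obtain ⟨Φ, hΦ, hS⟩ := isCompact_stepFunctions μ P hidx hQ
    refine ⟨_, hS, fun n => ⟨Φ fun i => j₀ (∫ s, u n s ∂(μ[|idx ⁻¹' {i}])),
      ⟨_, fun i _ => subset_closure ⟨_, hball n i, rfl⟩, rfl⟩, ?_⟩⟩
    have herr := averaging_error j₀ (j₁.comp j₀) hp.le hβ hC μ hidx hh hcell hdiam
      (humeas n) (hint n) (hM₀ n) (hM₁ n)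
    rw [Lp.edist_def, eLpNorm_congr_ae ((hfLp n).coeFn_toLp.sub (hΦ _)),
      eLpNorm_eq_lintegral_rpow_enorm_toReal hP0 hPtop, hPreal]
    refine ENNReal.rpow_le_rpow ?_ (by positivity)
    refine herr.trans ?_
    calc _ ≤ δ / 2 + δ / 2 := add_le_add hεM.le hN.le
      _ = δ := ENNReal.add_halves δ
  have htb : TotallyBounded (Set.range f) := by
    rw [EMetric.totallyBounded_iff]
    intro η hη
    obtain ⟨δ, hδ, hδη⟩ : ∃ δ : ℝ≥0∞, δ ≠ 0 ∧ δ ^ (1 / p) ≤ η / 2 := by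
      refine ⟨(η / 2) ^ p, ?_, ?_⟩
      · rw [Ne, ENNReal.rpow_eq_zero_iff_of_pos hp0]
        simpa using hη.ne'
      · rw [← ENNReal.rpow_mul, mul_one_div_cancel hp0.ne', ENNReal.rpow_one]
    obtain ⟨S, hS, hfS⟩ := happrox δ hδ
    obtain ⟨t, ht, hSt⟩ := EMetric.totallyBounded_iff.1 hS.totallyBounded (η / 2)
      (ENNReal.half_pos hη.ne')
    refine ⟨t, ht, ?_⟩
    rintro _ ⟨n, rfl⟩
    obtain ⟨g, hg, hd⟩ := hfS n
    obtain ⟨y, hy, hgy⟩ := Set.mem_iUnion₂.1 (hSt hg)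
    refine Set.mem_iUnion₂.2 ⟨y, hy, ?_⟩
    have hgy' : edist g y < η / 2 := hgy
    change edist (f n) y < η
    calc edist (f n) y ≤ edist (f n) g + edist g y := edist_triangle _ _ _
      _ < η / 2 + η / 2 := ENNReal.add_lt_add_of_le_of_lt
          (edist_ne_top _ _) (hd.trans hδη) hgy'
      _ = η := ENNReal.add_halves η
  obtain ⟨g, -, φ, hφ, hlim⟩ := htb.closure.isCompact_of_isClosed isClosed_closure
    |>.tendsto_subseq (fun n => subset_closure (Set.mem_range_self n))
  refine ⟨φ, hφ, g, Lp.aestronglyMeasurable g, ?_, ?_⟩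
  · have := (Lp.memLp g).2
    rwa [eLpNorm_lt_top_iff_lintegral_rpow_enorm_lt_top hP0 hPtop, hPreal] at this
  · rw [tendsto_iff_edist_tendsto_0] at hlim
    have h1 := ((ENNReal.continuous_rpow_const (y := p)).tendsto _).comp hlim
    rw [ENNReal.zero_rpow_of_pos hp0] at h1
    refine h1.congr fun k => ?_
    simp only [Function.comp_apply]
    rw [Lp.edist_def, eLpNorm_congr_ae ((hfLp (φ k)).coeFn_toLp.sub (ae_eq_refl _)),
      eLpNorm_eq_lintegral_rpow_enorm_toReal hP0 hPtop, hPreal, ← ENNReal.rpow_mul,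
      one_div_mul_cancel hp0.ne', ENNReal.rpow_one]
    rfl
end
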